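/- Assume the standing hypotheses. Then for every (x,y) ∈ ℕ₀²: (x,y) ∈ S if and only if x·d ≤ y·c (i.e., 0 ≤ φ(x,y) ≤ φ(w)) and x ∈ ⟨a,c⟩ (i.e., x = m·a + n·c for some m, n ∈ ℕ₀). -/

import Mathlib

/-- Embedding dimension 3, standing hypotheses: a, b, c > 0, b·c − a·d = 1,
S = ⟨(0,1), (a,b), (c,d)⟩.  Then (x,y) ∈ S iff x·d ≤ y·c (i.e. φ(x,y) ≤ φ(c,d))
and x ∈ ⟨a,c⟩. -/
theorem embdim3_membership (a b c d : ℕ) (ha : 0 < a) (hb : 0 < b) (hc : 0 < c)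
    (hstar : b * c = a * d + 1) :
    ∀ x y : ℕ,
      (x, y) ∈ AddSubmonoid.closure
          ({((0 : ℕ), (1 : ℕ)), (a, b), (c, d)} : Set (ℕ × ℕ)) ↔
        x * d ≤ y * c ∧ ∃ m n : ℕ, x = m * a + n * c := by
  intro x y
  constructor
  · intro h
    have key : ∀ p ∈ AddSubmonoid.closure
        ({((0 : ℕ), (1 : ℕ)), (a, b), (c, d)} : Set (ℕ × ℕ)),
        p.1 * d ≤ p.2 * c ∧ ∃ m n : ℕ, p.1 = m * a + n * c := by
      intro p hp
      induction hp using AddSubmonoid.closure_induction with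
      | mem p hp =>
        simp only [Set.mem_insert_iff, Set.mem_singleton_iff] at hp
        rcases hp with rfl | rfl | rfl
        · exact ⟨by simp, 0, 0, by simp⟩
        · exact ⟨by simp only; omega, 1, 0, by simp⟩
        · exact ⟨by simp only; rw [mul_comm], 0, 1, by simp⟩
      | zero => exact ⟨by simp, 0, 0, by simp⟩
      | add p q _ _ h1 h2 =>
        obtain ⟨h1, m, n, e⟩ := h1
        obtain ⟨h2, m', n', e'⟩ := h2
        refine ⟨?_, m + m', n + n', ?_⟩
        · simp only [Prod.fst_add, Prod.snd_add, add_mul]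
          omega
        · simp only [Prod.fst_add, e, e']
          ring
    exact key (x, y) h
  · rintro ⟨h, m, n, e⟩
    obtain ⟨r, k, hr, hx⟩ : ∃ r k : ℕ, r < c ∧ x = r * a + k * c := by
      refine ⟨m % c, n + m / c * a, Nat.mod_lt _ hc, ?_⟩
      rw [e]
      conv_lhs => rw [← Nat.mod_add_div m c]
      ring
    have hy : r * b + k * d ≤ y := by
      by_contra hlt
      have h1 : (y + 1) * c ≤ (r * b + k * d) * c :=
        Nat.mul_le_mul_right _ (by omega)
      have h2 : (r * b + k * d) * c = x * d + r := by
        calc (r * b + k * d) * c = r * (b * c) + k * d * c := by ring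
          _ = x * d + r := by rw [hstar, hx]; ring
      rw [add_mul] at h1
      omega
    obtain ⟨t, rfl⟩ := Nat.exists_eq_add_of_le hy
    have e2 : (x, r * b + k * d + t) =
        r • (a, b) + k • (c, d) + t • ((0 : ℕ), (1 : ℕ)) := by
      simp [hx]
    rw [e2]
    refine add_mem (add_mem ?_ ?_) ?_ <;>
      exact nsmul_mem (AddSubmonoid.subset_closure (by simp)) _
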